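/- Let 0 < ρ < 1 and let f ∈ AC([0,1]) have the 2nd level fractional derivative of order ρ and type (ν₁,ν₂) = (1−ρ, 0). Then the 2nd level fractional derivative coincides with the Caputo fractional derivative: (2LD^{ρ,(1−ρ,0)} f)(t) = RLD^ρ( f(·) − f(0) )(t) = (CD^ρ f)(t). -/

import Mathlib

open MeasureTheory Set Real Filter

/-- Riemann-Liouville fractional integral of order `ρ` on `[0,1]` (with `J⁰` the identity). -/
noncomputable def J (ρ : ℝ) (f : ℝ → ℝ) : ℝ → ℝ :=
  if ρ = 0 then f else
    fun t => (1 / Real.Gamma ρ) * ∫ τ in (0:ℝ)..t, (t - τ) ^ (ρ - 1) * f τ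

/-- Riemann-Liouville fractional derivative of order `ρ`. -/
noncomputable def RLD (ρ : ℝ) (f : ℝ → ℝ) : ℝ → ℝ :=
  fun t => deriv (J (1 - ρ) f) t

/-- `f ∈ L¹([0,1])`. -/
def MemL1 (f : ℝ → ℝ) : Prop := MeasureTheory.IntegrableOn f (Set.Icc 0 1)

/-- `f` is absolutely continuous on `[0,1]`: it is an integral of an `L¹` function. -/
def AC01 (f : ℝ → ℝ) : Prop :=
  ∃ g : ℝ → ℝ, MeasureTheory.IntegrableOn g (Set.Icc 0 1) ∧
    ∀ t ∈ Set.Icc (0:ℝ) 1, f t = f 0 + ∫ τ in (0:ℝ)..t, g τ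

/-- The 2nd level fractional derivative of order `ρ` and type `(ν₁, ν₂)`. -/
noncomputable def LFD2 (ρ ν₁ ν₂ : ℝ) (f : ℝ → ℝ) : ℝ → ℝ :=
  J ν₁ (deriv (J ν₂ (deriv (J (2 - ρ - ν₁ - ν₂) f))))

/-- The Caputo fractional derivative of order `ρ`. -/
noncomputable def CD (ρ : ℝ) (f : ℝ → ℝ) : ℝ → ℝ := J (1 - ρ) (deriv f)

/-!
Since `J¹ f` is a primitive of the continuous function `f`, its second derivative on the open
interval is `f'`, so the 2nd level derivative of type `(1 - ρ, 0)` is `J^{1-ρ} f'`, the Caputo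
derivative. On the other side, `f - f(0) = ∫₀ f'` by absolute continuity, and Fubini on the
triangle `0 < u < x < t` shows that `J^{1-ρ}` commutes with `∫₀`. Hence
`J^{1-ρ} (f - f(0)) = ∫₀ J^{1-ρ} f'`, and Lebesgue's differentiation theorem gives
`(d/dt) J^{1-ρ} (f - f(0)) = J^{1-ρ} f'` almost everywhere.
-/

open scoped Convolution

theorem integrable_indicator_Ioc {E : Type*} [NormedAddCommGroup E] {f : ℝ → E} {a b : ℝ}
    {μ : Measure ℝ} (hab : a ≤ b) (hf : IntervalIntegrable f μ a b) :
    Integrable ((Ioc a b).indicator f) μ :=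
  (integrable_indicator_iff measurableSet_Ioc).2
    ((intervalIntegrable_iff_integrableOn_Ioc_of_le hab).1 hf)

section HalfLineConvolution

variable {E E' F : Type*} [NormedAddCommGroup E] [NormedSpace ℝ E] [NormedAddCommGroup E']
  [NormedSpace ℝ E'] [NormedAddCommGroup F] [NormedSpace ℝ F] (L : E →L[ℝ] E' →L[ℝ] F)
  {f : ℝ → E} {g : ℝ → E'} {b : ℝ}

theorem convolution_indicator_Ioc {x : ℝ} (hx : x ∈ Icc 0 b) :
    ((Ioc 0 b).indicator f ⋆[L] (Ioc 0 b).indicator g) x =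
      ∫ u in 0..x, L (f u) (g (x - u)) := by
  rw [convolution_def, intervalIntegral.integral_of_le hx.1, integral_Ioc_eq_integral_Ioo,
    ← integral_indicator measurableSet_Ioo]
  congr 1 with u
  by_cases hu : u ∈ Ioo 0 x
  · have hu' : u ∈ Ioc 0 b := ⟨hu.1, hu.2.le.trans hx.2⟩
    have hxu : x - u ∈ Ioc 0 b := ⟨sub_pos.2 hu.2, by linarith [hu.1, hx.2]⟩
    rw [indicator_of_mem hu, indicator_of_mem hu', indicator_of_mem hxu]
  · rw [indicator_of_notMem hu]
    rcases not_and_or.1 hu with hu | hu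
    · rw [indicator_of_notMem fun h ↦ hu h.1, map_zero, zero_apply]
    · rw [indicator_of_notMem (fun h ↦ hu (sub_pos.1 h.1)) g, map_zero]

theorem intervalIntegrable_integral_halfLine (hb : 0 ≤ b) (hf : IntervalIntegrable f volume 0 b)
    (hg : IntervalIntegrable g volume 0 b) :
    IntervalIntegrable (fun x ↦ ∫ u in 0..x, L (f u) (g (x - u))) volume 0 b := by
  have hconv := (integrable_indicator_Ioc hb hf).integrable_convolution L
    (integrable_indicator_Ioc hb hg)
  refine hconv.intervalIntegrable.congr fun x hx ↦ ?_
  rw [uIoc_of_le hb] at hx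
  exact convolution_indicator_Ioc L (Ioc_subset_Icc_self hx)

theorem integral_indicator_Ioc_sub {u : ℝ} (hu : u ∈ Ioc 0 b) :
    ∫ x in 0..b, (Ioc 0 b).indicator g (x - u) = ∫ v in 0..b - u, g v := by
  rw [intervalIntegral.integral_comp_sub_right, zero_sub,
    intervalIntegral.integral_of_le (by linarith [hu.1, hu.2]),
    intervalIntegral.integral_of_le (sub_nonneg.2 hu.2), setIntegral_indicator measurableSet_Ioc,
    Ioc_inter_Ioc, max_eq_right (neg_nonpos.2 hu.1.le), min_eq_left (sub_le_self b hu.1.le)]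

theorem integral_integral_halfLine [CompleteSpace E'] [CompleteSpace F] (hb : 0 ≤ b)
    (hf : IntervalIntegrable f volume 0 b) (hg : IntervalIntegrable g volume 0 b) :
    ∫ x in 0..b, ∫ u in 0..x, L (f u) (g (x - u)) =
      ∫ u in 0..b, L (f u) (∫ v in 0..b - u, g v) := by
  -- Truncating to `(0, b]` turns both factors into integrable functions on the whole line.
  set f₀ := (Ioc 0 b).indicator f
  set g₀ := (Ioc 0 b).indicator g
  have hg₀ : Integrable g₀ := integrable_indicator_Ioc hb hg
  have hint : Integrable (Function.uncurry fun x u ↦ L (f₀ u) (g₀ (x - u)))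
      ((volume.restrict (uIoc 0 b)).prod volume) :=
    ((integrable_indicator_Ioc hb hf).convolution_integrand L hg₀).mono_measure
      (Measure.prod_mono Measure.restrict_le_self le_rfl)
  calc ∫ x in 0..b, ∫ u in 0..x, L (f u) (g (x - u))
    _ = ∫ x in 0..b, ∫ u, L (f₀ u) (g₀ (x - u)) :=
      intervalIntegral.integral_congr fun x hx ↦
        (convolution_indicator_Ioc L (uIcc_of_le hb ▸ hx)).symm
    _ = ∫ u, ∫ x in 0..b, L (f₀ u) (g₀ (x - u)) := intervalIntegral_integral_swap hint
    _ = ∫ u, L (f₀ u) (∫ x in 0..b, g₀ (x - u)) := by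
      congr 1 with u
      exact (L (f₀ u)).intervalIntegral_comp_comm (hg₀.comp_sub_right u).intervalIntegrable
    _ = ∫ u, (Ioc 0 b).indicator (fun u ↦ L (f u) (∫ v in 0..b - u, g v)) u := by
      congr 1 with u
      by_cases hu : u ∈ Ioc 0 b
      · rw [integral_indicator_Ioc_sub hu]
        simp only [f₀, indicator_of_mem hu]
      · simp only [f₀, indicator_of_notMem hu, map_zero, zero_apply]
    _ = ∫ u in 0..b, L (f u) (∫ v in 0..b - u, g v) := by
      rw [integral_indicator measurableSet_Ioc, intervalIntegral.integral_of_le hb]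

end HalfLineConvolution

section RiemannLiouville

variable {a b : ℝ} {f g : ℝ → ℝ}

theorem J_zero (f : ℝ → ℝ) : J 0 f = f := if_pos rfl

theorem J_one (f : ℝ → ℝ) : J 1 f = fun t ↦ ∫ τ in 0..t, f τ := by
  simp [J]

theorem J_eq_integral_rpow_mul (ha : a ≠ 0) (f : ℝ → ℝ) :
    J a f = fun t ↦ 1 / Gamma a * ∫ u in 0..t, u ^ (a - 1) * f (t - u) := by
  ext t
  have hsub := intervalIntegral.integral_comp_sub_left (a := 0) (b := t)
    (fun u ↦ u ^ (a - 1) * f (t - u)) t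
  simp only [sub_sub_cancel, sub_self, sub_zero] at hsub
  rw [J, if_neg ha, hsub]

theorem J_congr_Ioo (a : ℝ) (h : EqOn f g (Ioo 0 b)) : EqOn (J a f) (J a g) (Ioo 0 b) := by
  intro t ht
  rcases eq_or_ne a 0 with rfl | ha
  · simpa only [J_zero] using h ht
  · simp only [J, if_neg ha]
    congr 1
    refine intervalIntegral.integral_congr_Ioo_of_le ht.1.le fun τ hτ ↦ ?_
    simp only [h ⟨hτ.1, hτ.2.trans ht.2⟩]

theorem intervalIntegrable_J (ha : 0 ≤ a) (hb : 0 ≤ b) (hg : IntervalIntegrable g volume 0 b) :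
    IntervalIntegrable (J a g) volume 0 b := by
  rcases ha.eq_or_lt with rfl | ha
  · rwa [J_zero]
  · rw [J_eq_integral_rpow_mul ha.ne']
    have hker : IntervalIntegrable (fun u : ℝ ↦ u ^ (a - 1)) volume 0 b :=
      intervalIntegral.intervalIntegrable_rpow' (by linarith)
    exact (intervalIntegrable_integral_halfLine (.mul ℝ ℝ) hb hker hg).const_mul _

theorem J_integral_eq_integral_J (ha : 0 ≤ a) (hb : 0 ≤ b)
    (hg : IntervalIntegrable g volume 0 b) :
    J a (fun t ↦ ∫ τ in 0..t, g τ) b = ∫ t in 0..b, J a g t := by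
  rcases ha.eq_or_lt with rfl | ha
  · simp only [J_zero]
  · have hker : IntervalIntegrable (fun u : ℝ ↦ u ^ (a - 1)) volume 0 b :=
      intervalIntegral.intervalIntegrable_rpow' (by linarith)
    simp only [J_eq_integral_rpow_mul ha.ne', intervalIntegral.integral_const_mul]
    congr 1
    exact (integral_integral_halfLine (.mul ℝ ℝ) hb hker hg).symm

theorem deriv_J_one_eqOn (hf : ContinuousOn f (Icc 0 b)) :
    EqOn (deriv (J 1 f)) f (Ioo 0 b) := by
  intro t ht
  have hfo : ContinuousOn f (Ioo 0 b) := hf.mono Ioo_subset_Icc_self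
  have hint : IntervalIntegrable f volume 0 t :=
    (hf.mono (Icc_subset_Icc_right ht.2.le)).intervalIntegrable_of_Icc ht.1.le
  rw [J_one]
  exact (intervalIntegral.integral_hasDerivAt_right hint
    (hfo.stronglyMeasurableAtFilter isOpen_Ioo t ht)
    (hfo.continuousAt (Ioo_mem_nhds ht.1 ht.2))).deriv

theorem ae_deriv_J_sub_eq_J_deriv (ha : 0 ≤ a) (hb : 0 ≤ b)
    (hf : AbsolutelyContinuousOnInterval f 0 b) :
    ∀ᵐ t ∂volume.restrict (Ioo 0 b), deriv (J a fun s ↦ f s - f 0) t = J a (deriv f) t := by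
  have hf' : IntervalIntegrable (deriv f) volume 0 b := hf.intervalIntegrable_deriv
  have hsub {s : ℝ} (hs : s ∈ Ioo 0 b) : uIcc 0 s ⊆ uIcc 0 b := by
    rw [uIcc_of_le hs.1.le, uIcc_of_le hb]
    exact Icc_subset_Icc_right hs.2.le
  have hftc : EqOn (fun s ↦ f s - f 0) (fun s ↦ ∫ τ in 0..s, deriv f τ) (Ioo 0 b) :=
    fun s hs ↦ ((hf.mono (hsub hs)).integral_deriv_eq_sub).symm
  have hprim : EqOn (J a fun s ↦ f s - f 0) (fun s ↦ ∫ τ in 0..s, J a (deriv f) τ) (Ioo 0 b) :=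
    fun s hs ↦ (J_congr_Ioo a hftc hs).trans
      (J_integral_eq_integral_J ha hs.1.le (hf'.mono_set (hsub hs)))
  rw [ae_restrict_iff' measurableSet_Ioo]
  filter_upwards [(intervalIntegrable_J ha hb hf').ae_hasDerivAt_integral] with t ht htI
  have htb : t ∈ uIcc 0 b := hsub htI right_mem_uIcc
  rw [(hprim.eventuallyEq_of_mem (Ioo_mem_nhds htI.1 htI.2)).deriv_eq]
  exact (ht htb 0 left_mem_uIcc).deriv

end RiemannLiouville

theorem LFD2_eqOn_CD (ρ : ℝ) {f : ℝ → ℝ} {b : ℝ} (hf : ContinuousOn f (Icc 0 b)) :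
    EqOn (LFD2 ρ (1 - ρ) 0 f) (CD ρ f) (Ioo 0 b) := by
  have horder : 2 - ρ - (1 - ρ) - 0 = 1 := by ring
  rw [LFD2, CD, J_zero, horder]
  exact J_congr_Ioo _ ((deriv_J_one_eqOn hf).deriv isOpen_Ioo)

theorem absolutelyContinuousOnInterval_congr {X : Type*} [PseudoMetricSpace X] {f g : ℝ → X}
    {a b : ℝ} (hf : AbsolutelyContinuousOnInterval f a b) (h : EqOn f g (uIcc a b)) :
    AbsolutelyContinuousOnInterval g a b := by
  refine Tendsto.congr' ?_ hf
  filter_upwards [mem_inf_of_right (mem_principal_self _)] with I hI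
  refine Finset.sum_congr rfl fun i hi ↦ ?_
  rw [h (hI.1 i hi).1, h (hI.1 i hi).2]

theorem AC01.absolutelyContinuousOnInterval {f : ℝ → ℝ} (hf : AC01 f) :
    AbsolutelyContinuousOnInterval f 0 1 := by
  obtain ⟨g, hg, hfg⟩ := hf
  have hg' : IntervalIntegrable g volume 0 1 :=
    (intervalIntegrable_iff_integrableOn_Icc_of_le zero_le_one).2 hg
  have hconst : AbsolutelyContinuousOnInterval (fun _ ↦ f 0) 0 1 :=
    (LipschitzWith.const (f 0)).lipschitzOnWith.absolutelyContinuousOnInterval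
  refine absolutelyContinuousOnInterval_congr
    (hconst.add (hg'.absolutelyContinuousOnInterval_intervalIntegral left_mem_uIcc)) fun t ht ↦ ?_
  rw [uIcc_of_le zero_le_one] at ht
  exact (hfg t ht).symm

theorem stmt_10_general {ρ b : ℝ} (hρ : ρ ≤ 1) (hb : 0 ≤ b) {f : ℝ → ℝ}
    (hf : AbsolutelyContinuousOnInterval f 0 b) :
    ∀ᵐ t ∂volume.restrict (Icc 0 b),
      LFD2 ρ (1 - ρ) 0 f t = RLD ρ (fun s ↦ f s - f 0) t ∧
      LFD2 ρ (1 - ρ) 0 f t = CD ρ f t := by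
  have hcont : ContinuousOn f (Icc 0 b) := uIcc_of_le hb ▸ hf.continuousOn
  rw [← restrict_Ioo_eq_restrict_Icc]
  filter_upwards [ae_restrict_mem measurableSet_Ioo,
    ae_deriv_J_sub_eq_J_deriv (sub_nonneg.2 hρ) hb hf] with t ht hRLD
  have hCD : LFD2 ρ (1 - ρ) 0 f t = CD ρ f t := LFD2_eqOn_CD ρ hcont ht
  exact ⟨hCD.trans hRLD.symm, hCD⟩

/-- For type `(ν₁,ν₂) = (1-ρ,0)`, the 2nd level derivative is the Caputo derivative. -/
theorem stmt_10 (ρ : ℝ) (hρ0 : 0 < ρ) (hρ1 : ρ < 1) (f : ℝ → ℝ) (hf : AC01 f)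
    (hAC1 : AC01 (J (2 - ρ - (1 - ρ) - 0) f))
    (hAC2 : AC01 (J 0 (deriv (J (2 - ρ - (1 - ρ) - 0) f)))) :
    ∀ᵐ t ∂(volume.restrict (Set.Icc (0:ℝ) 1)),
      LFD2 ρ (1 - ρ) 0 f t = RLD ρ (fun s => f s - f 0) t ∧
      LFD2 ρ (1 - ρ) 0 f t = CD ρ f t :=
  stmt_10_general hρ1.le zero_le_one hf.absolutelyContinuousOnInterval
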